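/- arXiv:1712.09368 — 2 statements merged into one kernel-verified Lean document; each statement's English description precedes it below -/
import Mathlib

section
/- Fix a subset S ⊆ [n], 0 ≤ τ ≤ 1, and 0 < β < 1; set m = n − |S| and δ′ = (1/((1−β)m))·( log₂(1/P(W_S^{≥1−τ})) + (2|S| + βm)·log₂|𝒜 × ℬ| ). Then for every subset T ⊆ [n] ∖ S with |T| ≤ βm: E_j E_{(x_j, ω_{−j}, x_T, a_{S∪T}, b_S)} [ I(Y_j : A_j) ] ≤ 2δ′, where j is a uniformly random coordinate of [n] ∖ (T ∪ S); the outer sample (x_j, ω_{−j}, x_T, a_{S∪T}, b_S) is drawn from P conditioned on W_S^{≥1−τ} and on D_j = Alice (so that Ω_j fixes Alice's question X_j = x_j); and I(Y_j : A_j) denotes the Shannon mutual information (base 2) between Y_j and A_j under P conditioned on W_S^{≥1−τ}, Ω_{−j} = ω_{−j}, X_j = x_j, X_T = x_T, A_{S∪T} = a_{S∪T}, and B_S = b_S. -/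
/-!
Write `W` for the winning event and `R_j = (Ω_{-j}, X_T, A_{S∪T}, B_S)`. Let
`φ_j = P(Y_j | A_j, X_j, R_j, W) / μ(Y_j | X_j)`, evaluated at the sample (`roundRatio`).

* Mutual information is bounded by the divergence relative to any reference law for `Y_j`
  (`mutualInfo_le`). With the reference law `μ(· | X_j)`, the average of `I(Y_j : A_j)` is at most
  `E[log φ_j | W]`. As `D_j` is a fair coin independent of all else and `φ_j` does not depend on
  it, this equals `2 E[1_{D_j = Alice} log φ_j | W]` (`round_contribution_le`).
* Summing over `j ∉ T ∪ S` gives `2 E[log ∏_{j : D_j = Alice} φ_j | W]`, and Jensen's inequality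
  (`sum_mul_logb_le`) bounds it by `2 log (E[∏ φ_j] / P(W))`.
* By no-signaling, given `(X, A, D)` Bob's questions are independent with laws `μ(· | X_i)`. For a
  fixed value of `B_S`, each `φ_j` with `D_j = Alice` depends on `Y` only through `Y_j` and the
  coordinates in `S` or with `D_i = Bob`, and its integral against `μ(· | X_j)` is at most `1`.
  Hence integrating the product over Bob's questions gives at most `1`, and a union bound over the
  values of `B_S` yields `E[∏ φ_j] ≤ |ℬ|^|S|` (`sum_jointP_mul_prod_le`).

So the sum over `j` is at most `2 (log (1 / P(W)) + |S| log |ℬ|)` (`sum_round_le`), and there are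
`m - |T| ≥ (1 - β) m` coordinates `j`.
-/

open Finset
open scoped Classical

noncomputable section

/-- Probability of an event under a distribution on a finite type. -/
def pr {Λ : Type*} [Fintype Λ] (P : Λ → ℝ) (E : Λ → Prop) : ℝ :=
  ∑ s, if E s then P s else 0

/-- Distribution (marginal law) of a random variable `Z` under `P`. -/
def distOf {Λ ζ : Type*} [Fintype Λ] (P : Λ → ℝ) (Z : Λ → ζ) (z : ζ) : ℝ :=
  pr P (fun s => Z s = z)

/-- Conditional distribution of `Z` given the event `E`. -/
def condDist {Λ ζ : Type*} [Fintype Λ] (P : Λ → ℝ) (Z : Λ → ζ) (E : Λ → Prop) (z : ζ) : ℝ :=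
  pr P (fun s => Z s = z ∧ E s) / pr P E

/-- Total variation distance between two (finitely supported) distributions. -/
def tvDist {ζ : Type*} [Fintype ζ] (f g : ζ → ℝ) : ℝ :=
  (∑ z, |f z - g z|) / 2

/-- Kullback–Leibler divergence, base 2. -/
def klDiv {ζ : Type*} [Fintype ζ] (f g : ζ → ℝ) : ℝ :=
  ∑ z, if f z = 0 then 0 else f z * Real.logb 2 (f z / g z)

/-- Shannon mutual information (base 2) of a joint distribution on a product. -/
def mutualInfo {ζ₁ ζ₂ : Type*} [Fintype ζ₁] [Fintype ζ₂] (J : ζ₁ × ζ₂ → ℝ) : ℝ :=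
  klDiv J (fun p => (∑ v, J (p.1, v)) * (∑ u, J (u, p.2)))

/-- Sample space for `n` rounds: the questions `x, y`, the answers `a, b`, and the
dependency-breaking coins `d` (`true` = Alice). -/
abbrev Sample (𝒳 𝒴 𝒜 ℬ : Type*) (n : ℕ) : Type _ :=
  (Fin n → 𝒳) × (Fin n → 𝒴) × (Fin n → 𝒜) × (Fin n → ℬ) × (Fin n → Bool)

namespace Sample

variable {𝒳 𝒴 𝒜 ℬ : Type*} {n : ℕ}

/-- Alice's questions. -/ def x (s : Sample 𝒳 𝒴 𝒜 ℬ n) : Fin n → 𝒳 := s.1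
/-- Bob's questions. -/ def y (s : Sample 𝒳 𝒴 𝒜 ℬ n) : Fin n → 𝒴 := s.2.1
/-- Alice's answers. -/ def a (s : Sample 𝒳 𝒴 𝒜 ℬ n) : Fin n → 𝒜 := s.2.2.1
/-- Bob's answers. -/ def b (s : Sample 𝒳 𝒴 𝒜 ℬ n) : Fin n → ℬ := s.2.2.2.1
/-- The coins `D_i` (`true` = Alice). -/ def d (s : Sample 𝒳 𝒴 𝒜 ℬ n) : Fin n → Bool := s.2.2.2.2

end Sample

variable {𝒳 𝒴 𝒜 ℬ : Type*} [Fintype 𝒳] [Fintype 𝒴] [Fintype 𝒜] [Fintype ℬ] {n : ℕ}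

/-- The joint distribution of questions (i.i.d. from `μ`), answers (given by the strategy `q`)
and the uniform dependency-breaking coins. -/
def jointP (μ : 𝒳 × 𝒴 → ℝ)
    (q : (Fin n → 𝒳) → (Fin n → 𝒴) → (Fin n → 𝒜) × (Fin n → ℬ) → ℝ)
    (s : Sample 𝒳 𝒴 𝒜 ℬ n) : ℝ :=
  (∏ i, μ (s.x i, s.y i)) * q s.x s.y (s.a, s.b) * (1 / 2) ^ n

/-- The event `W_S^{≥ 1-τ}`: at least a `1 - τ` fraction of the coordinates in `S` are won. -/
def winS (V : 𝒳 → 𝒴 → 𝒜 → ℬ → Prop) (S : Finset (Fin n)) (τ : ℝ)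
    (s : Sample 𝒳 𝒴 𝒜 ℬ n) : Prop :=
  (1 - τ) * (S.card : ℝ) ≤ ((S.filter (fun i => V (s.x i) (s.y i) (s.a i) (s.b i))).card : ℝ)

/-- The value space of the dependency-breaking variable `Ω = (Ω_1,…,Ω_n, X_S, Y_S)`;
`Ω_i ∈ 𝒳 ⊕ 𝒴` encodes the pair `(D_i, M_i)`. -/
abbrev OmegaType (𝒳 𝒴 : Type*) {n : ℕ} (S : Finset (Fin n)) : Type _ :=
  (Fin n → 𝒳 ⊕ 𝒴) × ({i : Fin n // i ∈ S} → 𝒳) × ({i : Fin n // i ∈ S} → 𝒴)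

/-- The dependency-breaking random variable `Ω`. -/
def omegaRV (S : Finset (Fin n)) (s : Sample 𝒳 𝒴 𝒜 ℬ n) : OmegaType 𝒳 𝒴 S :=
  (fun i => if s.d i then Sum.inl (s.x i) else Sum.inr (s.y i),
   fun i => s.x i.1, fun i => s.y i.1)

/-- The value space of `Ω_{-j}` (`Ω` with its `j`-th coordinate omitted). -/
abbrev OmegaMinusType (𝒳 𝒴 : Type*) {n : ℕ} (S : Finset (Fin n)) (j : Fin n) : Type _ :=
  ({i : Fin n // i ≠ j} → 𝒳 ⊕ 𝒴) × ({i : Fin n // i ∈ S} → 𝒳) × ({i : Fin n // i ∈ S} → 𝒴)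

/-- The random variable `Ω_{-j}`. -/
def omegaMinusRV (S : Finset (Fin n)) (j : Fin n) (s : Sample 𝒳 𝒴 𝒜 ℬ n) :
    OmegaMinusType 𝒳 𝒴 S j :=
  (fun i => if s.d i.1 then Sum.inl (s.x i.1) else Sum.inr (s.y i.1),
   fun i => s.x i.1, fun i => s.y i.1)

/-- The value space of `R_{Tj} = (Ω_{-j}, X_T, A_{S∪T}, B_S)`. -/
abbrev RType (𝒳 𝒴 𝒜 ℬ : Type*) {n : ℕ} (S T : Finset (Fin n)) (j : Fin n) : Type _ :=
  OmegaMinusType 𝒳 𝒴 S j × ({i : Fin n // i ∈ T} → 𝒳) ×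
    ({i : Fin n // i ∈ S ∪ T} → 𝒜) × ({i : Fin n // i ∈ S} → ℬ)

/-- The random variable `R_{Tj} = (Ω_{-j}, X_T, A_{S∪T}, B_S)`. -/
def rRV (S T : Finset (Fin n)) (j : Fin n) (s : Sample 𝒳 𝒴 𝒜 ℬ n) : RType 𝒳 𝒴 𝒜 ℬ S T j :=
  (omegaMinusRV S j s, fun i => s.x i.1, fun i => s.a i.1, fun i => s.b i.1)


/-! ### Elementary facts on finite distributions -/

lemma pr_nonneg {Λ : Type*} [Fintype Λ] {P : Λ → ℝ} (hP : ∀ s, 0 ≤ P s) (E : Λ → Prop) :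
    0 ≤ pr P E :=
  Finset.sum_nonneg fun s _ => by split_ifs <;> simp [hP s]

lemma sum_pr_eq {Λ ζ : Type*} [Fintype Λ] [Fintype ζ] (P : Λ → ℝ) (E : Λ → Prop) (Z : Λ → ζ) :
    ∑ z, pr P (fun s => E s ∧ Z s = z) = pr P E := by
  unfold pr
  rw [Finset.sum_comm]
  refine Finset.sum_congr rfl fun s _ => ?_
  by_cases h : E s <;> simp [h]

lemma sum_pr_mul {Λ ζ : Type*} [Fintype Λ] [Fintype ζ] (P : Λ → ℝ) (E : Λ → Prop) (Z : Λ → ζ)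
    (g : ζ → ℝ) :
    ∑ z, pr P (fun s => E s ∧ Z s = z) * g z = ∑ s, if E s then P s * g (Z s) else 0 := by
  unfold pr
  simp_rw [Finset.sum_mul]
  rw [Finset.sum_comm]
  refine Finset.sum_congr rfl fun s _ => ?_
  by_cases h : E s <;> simp [h]

lemma pr_pos {Λ : Type*} [Fintype Λ] {P : Λ → ℝ} (hP : ∀ s, 0 ≤ P s) {E : Λ → Prop} {s : Λ}
    (hs : 0 < P s) (hE : E s) : 0 < pr P E := by
  unfold pr
  refine Finset.sum_pos' (fun t _ => by split_ifs <;> simp [hP t]) ⟨s, Finset.mem_univ _, ?_⟩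
  simpa [hE] using hs

lemma pr_le_pr {Λ : Type*} [Fintype Λ] {P : Λ → ℝ} (hP : ∀ s, 0 ≤ P s) {E E' : Λ → Prop}
    (h : ∀ s, E s → E' s) : pr P E ≤ pr P E' := by
  unfold pr
  refine Finset.sum_le_sum fun s _ => ?_
  by_cases h1 : E s
  · simp [h1, h s h1]
  · simp only [h1, if_false]; split_ifs <;> simp [hP s]

/-- Mutual information is at most the divergence of the joint law from `κ ⊗ J₂`, where `J₂` is the
second marginal and `κ` any reference (sub-)law for the first variable: the difference is the
divergence of the first marginal from `κ`. -/
lemma mutualInfo_le {η α : Type*} [Fintype η] [Fintype α] (J : η × α → ℝ) (hJ : ∀ p, 0 ≤ J p)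
    (hJ1 : ∑ p, J p = 1) (κ : η → ℝ) (hκ : ∀ y, 0 ≤ κ y) (hκ1 : ∑ y, κ y ≤ 1)
    (hpos : ∀ p, J p ≠ 0 → 0 < κ p.1) :
    mutualInfo J ≤ ∑ p, J p * Real.logb 2 (J p / ((∑ u, J (u, p.2)) * κ p.1)) := by
  have hl2 : 0 < Real.log 2 := Real.log_pos (by norm_num)
  have key : ∀ p, (if J p = 0 then 0 else
        J p * Real.logb 2 (J p / ((∑ v, J (p.1, v)) * (∑ u, J (u, p.2)))))
      - J p * Real.logb 2 (J p / ((∑ u, J (u, p.2)) * κ p.1))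
      ≤ (J p * (κ p.1 / (∑ v, J (p.1, v))) - J p) / Real.log 2 := by
    intro p
    by_cases h : J p = 0
    · simp [h]
    have hp : 0 < J p := lt_of_le_of_ne (hJ p) (Ne.symm h)
    have h1 : 0 < ∑ v, J (p.1, v) :=
      Finset.sum_pos' (fun v _ => hJ _) ⟨p.2, Finset.mem_univ _, hp⟩
    have h2 : 0 < ∑ u, J (u, p.2) :=
      Finset.sum_pos' (fun v _ => hJ _) ⟨p.1, Finset.mem_univ _, hp⟩
    have h3 := hpos p h
    rw [if_neg h]
    have e : Real.logb 2 (J p / ((∑ v, J (p.1, v)) * (∑ u, J (u, p.2))))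
        - Real.logb 2 (J p / ((∑ u, J (u, p.2)) * κ p.1))
        = Real.log (κ p.1 / (∑ v, J (p.1, v))) / Real.log 2 := by
      unfold Real.logb
      rw [Real.log_div hp.ne' (by positivity), Real.log_div hp.ne' (by positivity),
        Real.log_mul h1.ne' h2.ne', Real.log_mul h2.ne' h3.ne', Real.log_div h3.ne' h1.ne']
      ring
    have h4 := Real.log_le_sub_one_of_pos (div_pos h3 h1)
    rw [← mul_sub, e, ← mul_div_assoc]
    gcongr
    nlinarith
  have hsum := Finset.sum_le_sum fun p (_ : p ∈ Finset.univ) => key p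
  rw [Finset.sum_sub_distrib, ← Finset.sum_div, Finset.sum_sub_distrib, hJ1] at hsum
  have h5 : ∑ p : η × α, J p * (κ p.1 / (∑ v, J (p.1, v))) ≤ 1 := by
    rw [Fintype.sum_prod_type]
    refine le_trans (Finset.sum_le_sum fun y _ => ?_) hκ1
    simp only
    rw [← Finset.sum_mul]
    by_cases h : ∑ v, J (y, v) = 0
    · rw [h, zero_mul]; exact hκ y
    · rw [mul_div_cancel₀ _ h]
  have h6 : (∑ p : η × α, J p * (κ p.1 / (∑ v, J (p.1, v))) - 1) / Real.log 2 ≤ 0 :=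
    div_nonpos_of_nonpos_of_nonneg (by linarith) hl2.le
  unfold mutualInfo klDiv
  linarith

/-- The conditional law of `Y` at its observed value, given `E`, `R` and `A`, divided by the
reference law `κ`. -/
def likelihood {Λ ρ η α : Type*} [Fintype Λ] (P : Λ → ℝ) (E : Λ → Prop) (R : Λ → ρ) (Y : Λ → η)
    (A : Λ → α) (κ : ρ → η → ℝ) (s : Λ) : ℝ :=
  pr P (fun t => E t ∧ (R t, Y t, A t) = (R s, Y s, A s)) /
    (pr P (fun t => E t ∧ (R t, A t) = (R s, A s)) * κ (R s) (Y s))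

/-- The mutual information of `Y` and `A` given `E` and `R`, summed against the unnormalized law of
`R` on `E`, is at most the log-likelihood ratio of `Y` summed against the law on `E`. -/
lemma sum_mutualInfo_le {Λ ρ η α : Type*} [Fintype Λ] [Fintype ρ] [Fintype η] [Fintype α]
    (P : Λ → ℝ) (hP : ∀ s, 0 ≤ P s) (E : Λ → Prop) (R : Λ → ρ) (Y : Λ → η) (A : Λ → α)
    (κ : ρ → η → ℝ) (hκ : ∀ r y, 0 ≤ κ r y) (hκ1 : ∀ r, ∑ y, κ r y ≤ 1)
    (hpos : ∀ s, E s → P s ≠ 0 → 0 < κ (R s) (Y s)) :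
    ∑ r, pr P (fun s => E s ∧ R s = r) *
        mutualInfo (condDist P (fun s => (Y s, A s)) (fun s => E s ∧ R s = r))
      ≤ ∑ s, if E s then P s * Real.logb 2 (likelihood P E R Y A κ s) else 0 := by
  have h1 := sum_pr_mul P E (fun s => (R s, Y s, A s)) (fun z =>
    Real.logb 2 (pr P (fun t => E t ∧ (R t, Y t, A t) = z) /
      (pr P (fun t => E t ∧ (R t, A t) = (z.1, z.2.2)) * κ z.1 z.2.1)))
  unfold likelihood
  rw [← h1, Fintype.sum_prod_type]
  refine Finset.sum_le_sum fun r _ => ?_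
  set D := pr P (fun s => E s ∧ R s = r) with hD
  have hF : ∀ p : η × α, pr P (fun t => E t ∧ (R t, Y t, A t) = (r, p)) ≤ D := fun p =>
    pr_le_pr hP fun s hs => ⟨hs.1, (Prod.ext_iff.1 hs.2).1⟩
  have hD0 : 0 ≤ D := pr_nonneg hP _
  rcases hD0.eq_or_lt with h0 | h0
  · rw [← h0, zero_mul]
    refine (Finset.sum_eq_zero fun p _ => ?_).ge
    rw [le_antisymm (h0 ▸ hF p) (pr_nonneg hP _), zero_mul]
  have hJ : ∀ p : η × α, condDist P (fun s => (Y s, A s)) (fun s => E s ∧ R s = r) p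
      = pr P (fun t => E t ∧ (R t, Y t, A t) = (r, p)) / D := by
    intro p
    unfold condDist
    rw [← hD]
    congr 2
    funext s
    simp only [Prod.ext_iff, eq_iff_iff]
    tauto
  have hA : ∀ p : η × α, ∑ u, condDist P (fun s => (Y s, A s)) (fun s => E s ∧ R s = r) (u, p.2)
      = pr P (fun t => E t ∧ (R t, A t) = (r, p.2)) / D := by
    intro p
    simp_rw [hJ]
    rw [← Finset.sum_div, ← sum_pr_eq P _ Y]
    congr 1
    refine Finset.sum_congr rfl fun u _ => ?_
    congr 1
    funext s
    simp only [Prod.ext_iff, eq_iff_iff]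
    tauto
  have h2 := mutualInfo_le (condDist P (fun s => (Y s, A s)) (fun s => E s ∧ R s = r))
    (fun p => by rw [hJ]; exact div_nonneg (pr_nonneg hP _) hD0)
    (by
      simp_rw [hJ]
      rw [← Finset.sum_div, div_eq_one_iff_eq h0.ne', hD, ← sum_pr_eq P _ (fun s => (Y s, A s))]
      refine Finset.sum_congr rfl fun u _ => ?_
      congr 1
      funext s
      simp only [Prod.ext_iff, eq_iff_iff]
      tauto)
    (κ r) (hκ r) (hκ1 r)
    (by
      intro p hp
      rw [hJ] at hp
      have : pr P (fun t => E t ∧ (R t, Y t, A t) = (r, p)) ≠ 0 := fun h => hp (by rw [h, zero_div])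
      obtain ⟨s, _, hs⟩ := Finset.exists_ne_zero_of_sum_ne_zero this
      simp only [Prod.ext_iff, ne_eq, ite_eq_right_iff, Classical.not_imp] at hs
      have := hpos s hs.1.1 hs.2
      rwa [hs.1.2.1, hs.1.2.2.1] at this)
  refine (mul_le_mul_of_nonneg_left h2 hD0).trans (le_of_eq ?_)
  rw [Finset.mul_sum]
  refine Finset.sum_congr rfl fun p _ => ?_
  rw [hA, hJ, ← mul_assoc, mul_div_cancel₀ _ h0.ne']
  congr 2
  rw [div_mul_eq_mul_div, div_div_div_cancel_right₀ h0.ne']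

/-- Jensen's inequality for the logarithm, for an unnormalized weight `w`. -/
lemma sum_mul_logb_le {Λ : Type*} [Fintype Λ] (w ρ : Λ → ℝ) (hw : ∀ s, 0 ≤ w s)
    (hρ : ∀ s, w s ≠ 0 → 0 < ρ s) (K : ℝ) (hK : 0 < K) (hW : 0 < ∑ s, w s)
    (h : ∑ s, w s * ρ s ≤ K) :
    ∑ s, w s * Real.logb 2 (ρ s) ≤ (∑ s, w s) * Real.logb 2 (K / ∑ s, w s) := by
  have hl2 : 0 < Real.log 2 := Real.log_pos (by norm_num)
  set W := ∑ s, w s with hWd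
  have key : ∀ s, w s * Real.log (ρ s) ≤ w s * Real.log (K / W) + (w s * ρ s) * (W / K) - w s := by
    intro s
    by_cases hs : w s = 0
    · simp [hs]
    have h1 := Real.log_le_sub_one_of_pos (mul_pos (hρ s hs) (div_pos hW hK))
    rw [Real.log_mul (hρ s hs).ne' (div_pos hW hK).ne', Real.log_div hW.ne' hK.ne'] at h1
    rw [Real.log_div hK.ne' hW.ne']
    nlinarith [hw s]
  have hs := Finset.sum_le_sum fun s (_ : s ∈ Finset.univ) => key s
  rw [Finset.sum_sub_distrib, Finset.sum_add_distrib, ← Finset.sum_mul, ← Finset.sum_mul,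
    ← hWd] at hs
  have h2 : (∑ s, w s * ρ s) * (W / K) ≤ W := by
    calc _ ≤ K * (W / K) := by gcongr
      _ = W := mul_div_cancel₀ _ hK.ne'
  unfold Real.logb
  simp_rw [← mul_div_assoc]
  rw [← Finset.sum_div]
  gcongr
  linarith

/-! ### Integrating out conditionally independent coordinates -/

lemma sum_le_sum_of_update {η : Type*} [Fintype η] {n : ℕ} (k : Fin n) (f g : (Fin n → η) → ℝ)
    (h : ∀ y, ∑ v, f (Function.update y k v) ≤ ∑ v, g (Function.update y k v)) :
    ∑ y, f y ≤ ∑ y, g y := by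
  have e : ∀ F : (Fin n → η) → ℝ, ∑ y, F y
      = ∑ z : {i // i ≠ k} → η, ∑ v, F ((Equiv.funSplitAt k η).symm (v, z)) := by
    intro F
    rw [← (Equiv.funSplitAt k η).symm.sum_comp, Fintype.sum_prod_type, Finset.sum_comm]
  rw [e, e]
  refine Finset.sum_le_sum fun z _ => ?_
  rcases isEmpty_or_nonempty η with hη | ⟨⟨v0⟩⟩
  · simp
  have h1 := h ((Equiv.funSplitAt k η).symm (v0, z))
  have e2 : ∀ v, Function.update ((Equiv.funSplitAt k η).symm (v0, z)) k v
      = (Equiv.funSplitAt k η).symm (v, z) := by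
    intro v
    funext i
    by_cases hi : i = k
    · subst hi; simp [Equiv.funSplitAt, Equiv.piSplitAt]
    · simp [Equiv.funSplitAt, Equiv.piSplitAt, hi]
  simpa only [e2] using h1

/-- If each `φ j`, `j ∈ J`, ignores the other coordinates in `J` and does not increase the mass of
coordinate `j`, then the product of the `φ j` does not increase the mass of a product weight. -/
lemma sum_prod_le {η : Type*} [Fintype η] {n : ℕ} (m : Fin n → η → ℝ) (hm : ∀ i v, 0 ≤ m i v)
    (φ : Fin n → (Fin n → η) → ℝ) (h0 : ∀ j y, 0 ≤ φ j y) (J : Finset (Fin n))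
    (hind : ∀ j ∈ J, ∀ k ∈ J, k ≠ j → ∀ y v, φ j (Function.update y k v) = φ j y)
    (hle : ∀ j ∈ J, ∀ y, ∑ v, m j v * φ j (Function.update y j v) ≤ ∑ v, m j v) :
    ∑ y, (∏ i, m i (y i)) * ∏ j ∈ J, φ j y ≤ ∑ y : Fin n → η, ∏ i, m i (y i) := by
  induction J using Finset.induction_on with
  | empty => simp
  | insert k J hk ih =>
    refine le_trans ?_ (ih
      (fun j hj l hl => hind j (Finset.mem_insert_of_mem hj) l (Finset.mem_insert_of_mem hl))
      (fun j hj => hle j (Finset.mem_insert_of_mem hj)))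
    refine sum_le_sum_of_update k _ _ fun y => ?_
    have e1 : ∀ v, ∏ i, m i (Function.update y k v i)
        = m k v * ∏ i ∈ Finset.univ.erase k, m i (y i) := by
      intro v
      rw [← Finset.mul_prod_erase _ _ (Finset.mem_univ k), Function.update_self]
      congr 1
      refine Finset.prod_congr rfl fun i hi => ?_
      rw [Function.update_of_ne (Finset.ne_of_mem_erase hi)]
    have e2 : ∀ v, ∏ j ∈ J, φ j (Function.update y k v) = ∏ j ∈ J, φ j y := by
      intro v
      refine Finset.prod_congr rfl fun j hj => ?_
      exact hind j (Finset.mem_insert_of_mem hj) k (Finset.mem_insert_self _ _)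
        (fun h => hk (h ▸ hj)) y v
    simp_rw [Finset.prod_insert hk, e1, e2]
    set c := (∏ i ∈ Finset.univ.erase k, m i (y i)) with hc
    set e := ∏ j ∈ J, φ j y
    have hce : 0 ≤ c * e :=
      mul_nonneg (Finset.prod_nonneg fun i _ => hm _ _) (Finset.prod_nonneg fun j _ => h0 _ _)
    calc ∑ v, m k v * c * (φ k (Function.update y k v) * e)
        = (∑ v, m k v * φ k (Function.update y k v)) * (c * e) := by
          rw [Finset.sum_mul]; exact Finset.sum_congr rfl fun v _ => by ring
      _ ≤ (∑ v, m k v) * (c * e) :=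
          mul_le_mul_of_nonneg_right (hle k (Finset.mem_insert_self _ _) y) hce
      _ = ∑ v, m k v * c * e := by
          rw [Finset.sum_mul]; exact Finset.sum_congr rfl fun v _ => by ring

/-! ### The law of the game -/

lemma jointP_nonneg {𝒳 𝒴 𝒜 ℬ : Type*} {n : ℕ} (μ : 𝒳 × 𝒴 → ℝ) (hμ0 : ∀ p, 0 ≤ μ p)
    (q : (Fin n → 𝒳) → (Fin n → 𝒴) → (Fin n → 𝒜) × (Fin n → ℬ) → ℝ)
    (hq0 : ∀ x y ab, 0 ≤ q x y ab) (s : Sample 𝒳 𝒴 𝒜 ℬ n) : 0 ≤ jointP μ q s :=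
  mul_nonneg (mul_nonneg (Finset.prod_nonneg fun _ _ => hμ0 _) (hq0 _ _ _)) (by positivity)

lemma sum_prod_mu (μ : 𝒳 × 𝒴 → ℝ) (hμ1 : ∑ p, μ p = 1) :
    ∑ x : Fin n → 𝒳, ∑ y : Fin n → 𝒴, ∏ i, μ (x i, y i) = 1 := by
  have h : ∀ x : Fin n → 𝒳, ∑ y : Fin n → 𝒴, ∏ i, μ (x i, y i) = ∏ i, ∑ v, μ (x i, v) := by
    intro x
    rw [Finset.prod_univ_sum, Fintype.piFinset_univ]
  simp_rw [h]
  have h2 := Finset.prod_univ_sum (fun _ : Fin n => (Finset.univ : Finset 𝒳))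
    (fun _ u => ∑ v, μ (u, v))
  rw [Fintype.piFinset_univ] at h2
  rw [← h2, ← Fintype.sum_prod_type, hμ1]
  simp

/-- Reweighting by likelihood ratios of Bob's questions costs at most one factor `|ℬ|` per
coordinate of `S`. By no-signaling, Bob's questions given `(X, A)` are independent across
coordinates, and for each fixed value of `B_S` the reweighting does not increase the mass. -/
lemma sum_jointP_mul_prod_le (μ : 𝒳 × 𝒴 → ℝ) (hμ0 : ∀ p, 0 ≤ μ p) (hμ1 : ∑ p, μ p = 1)
    (q : (Fin n → 𝒳) → (Fin n → 𝒴) → (Fin n → 𝒜) × (Fin n → ℬ) → ℝ)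
    (hq0 : ∀ x y ab, 0 ≤ q x y ab) (hq1 : ∀ x y, ∑ ab, q x y ab = 1)
    (hNSA : ∀ x y y' a, (∑ b, q x y (a, b)) = ∑ b, q x y' (a, b))
    (S : Finset (Fin n)) (y₀ : Fin n → 𝒴) (b₀ : Fin n → ℬ)
    (J : (Fin n → Bool) → Finset (Fin n)) (φ : Fin n → Sample 𝒳 𝒴 𝒜 ℬ n → ℝ)
    (h0 : ∀ j s, 0 ≤ φ j s)
    (hb : ∀ x y a b b' d, (∀ i ∈ S, b i = b' i) → ∀ j, φ j (x, y, a, b, d) = φ j (x, y, a, b', d))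
    (hind : ∀ x y a b d, ∀ j ∈ J d, ∀ k ∈ J d, k ≠ j → ∀ v,
      φ j (x, Function.update y k v, a, b, d) = φ j (x, y, a, b, d))
    (hle : ∀ x y a b d, ∀ j ∈ J d,
      ∑ v, μ (x j, v) * φ j (x, Function.update y j v, a, b, d) ≤ ∑ v, μ (x j, v)) :
    ∑ s, jointP μ q s * ∏ j ∈ J s.d, φ j s ≤ (Fintype.card ℬ : ℝ) ^ S.card := by
  let ext : ({i // i ∈ S} → ℬ) → Fin n → ℬ := fun c i => if h : i ∈ S then c ⟨i, h⟩ else b₀ i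
  let ψ : (Fin n → 𝒳) → (Fin n → 𝒴) → (Fin n → 𝒜) → (Fin n → ℬ) → (Fin n → Bool) → ℝ :=
    fun x y a b d => ∏ j ∈ J d, φ j (x, y, a, b, d)
  have hψ : ∀ x y a b d, 0 ≤ ψ x y a b d := fun x y a b d => Finset.prod_nonneg fun j _ => h0 _ _
  have hψ1 : ∀ x y a b d, ψ x y a b d ≤ ∑ c, ψ x y a (ext c) d := by
    intro x y a b d
    have : ψ x y a b d = ψ x y a (ext fun i => b i.1) d :=
      Finset.prod_congr rfl fun j _ => hb _ _ _ _ _ _ (fun i hi => by simp [ext, hi]) j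
    rw [this]
    exact Finset.single_le_sum (f := fun c => ψ x y a (ext c) d) (fun c _ => hψ _ _ _ _ _)
      (Finset.mem_univ (fun i : {i // i ∈ S} => b i.1))
  -- The mass of the reweighted law at a fixed value `c` of `B_S`.
  have hc : ∀ c, ∑ x, ∑ y, ∑ a, ∑ b, ∑ d, (∏ i, μ (x i, y i)) * q x y (a, b) * (1 / 2) ^ n *
      ψ x y a (ext c) d ≤ 1 := by
    intro c
    have hd : ∑ _d : Fin n → Bool, (1 / 2 : ℝ) ^ n = 1 := by
      simp
    calc ∑ x, ∑ y, ∑ a, ∑ b, ∑ d, (∏ i, μ (x i, y i)) * q x y (a, b) * (1 / 2) ^ n *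
            ψ x y a (ext c) d
        = ∑ x, ∑ a, ∑ d, ((∑ b, q x y₀ (a, b)) * (1 / 2) ^ n) *
            ∑ y, (∏ i, μ (x i, y i)) * ψ x y a (ext c) d := by
          refine Finset.sum_congr rfl fun x _ => ?_
          rw [Finset.sum_comm]
          refine Finset.sum_congr rfl fun a _ => ?_
          simp_rw [Finset.mul_sum]
          rw [Finset.sum_comm (s := (Finset.univ : Finset (Fin n → Bool)))]
          refine Finset.sum_congr rfl fun y _ => ?_
          rw [Finset.sum_comm]
          refine Finset.sum_congr rfl fun d _ => ?_
          rw [hNSA x y₀ y a, Finset.sum_mul, Finset.sum_mul]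
          exact Finset.sum_congr rfl fun b _ => by ring
      _ ≤ ∑ x, ∑ a, ∑ d : Fin n → Bool, ((∑ b, q x y₀ (a, b)) * (1 / 2) ^ n) *
            ∑ y : Fin n → 𝒴, ∏ i, μ (x i, y i) := by
          refine Finset.sum_le_sum fun x _ => Finset.sum_le_sum fun a _ =>
            Finset.sum_le_sum fun d _ => mul_le_mul_of_nonneg_left ?_
              (mul_nonneg (Finset.sum_nonneg fun b _ => hq0 _ _ _) (by positivity))
          exact sum_prod_le (fun i v => μ (x i, v)) (fun _ _ => hμ0 _)
            (fun j y => φ j (x, y, a, ext c, d)) (fun _ _ => h0 _ _) (J d)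
            (fun j hj k hk hkj y v => hind x y a (ext c) d j hj k hk hkj v)
            (fun j hj y => hle x y a (ext c) d j hj)
      _ = ∑ x : Fin n → 𝒳, ∑ y : Fin n → 𝒴, ∏ i, μ (x i, y i) := by
          refine Finset.sum_congr rfl fun x _ => ?_
          have h1 : ∑ a, ∑ b, q x y₀ (a, b) = 1 := by rw [← Fintype.sum_prod_type, hq1]
          calc _ = (∑ a, ∑ b, q x y₀ (a, b)) * (∑ _d : Fin n → Bool, (1 / 2 : ℝ) ^ n) *
                ∑ y : Fin n → 𝒴, ∏ i, μ (x i, y i) := by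
                rw [Finset.sum_mul_sum, Finset.sum_mul]
                exact Finset.sum_congr rfl fun a _ => (Finset.sum_mul _ _ _).symm
            _ = _ := by rw [h1, hd, one_mul, one_mul]
      _ = 1 := sum_prod_mu μ hμ1
  calc ∑ s, jointP μ q s * ∏ j ∈ J s.d, φ j s
      ≤ ∑ s : Sample 𝒳 𝒴 𝒜 ℬ n, jointP μ q s * ∑ c, ψ s.x s.y s.a (ext c) s.d :=
        Finset.sum_le_sum fun s _ => mul_le_mul_of_nonneg_left (hψ1 s.x s.y s.a s.b s.d)
          (jointP_nonneg μ hμ0 q hq0 s)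
    _ = ∑ c, ∑ s : Sample 𝒳 𝒴 𝒜 ℬ n, jointP μ q s * ψ s.x s.y s.a (ext c) s.d := by
        simp_rw [Finset.mul_sum]; exact Finset.sum_comm
    _ ≤ ∑ _c : {i // i ∈ S} → ℬ, (1 : ℝ) := by
        refine Finset.sum_le_sum fun c _ => ?_
        simp_rw [Fintype.sum_prod_type]
        exact hc c
    _ = (Fintype.card ℬ : ℝ) ^ S.card := by simp

/-- The coin `D_j` is a fair coin independent of everything else. -/
lemma sum_eq_two_mul_sum_coin (j : Fin n) (f : Sample 𝒳 𝒴 𝒜 ℬ n → ℝ)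
    (hf : ∀ x y a b d v, f (x, y, a, b, Function.update d j v) = f (x, y, a, b, d)) :
    ∑ s, f s = 2 * ∑ s, if s.d j = true then f s else 0 := by
  simp_rw [Fintype.sum_prod_type, Finset.mul_sum]
  refine Finset.sum_congr rfl fun x _ => Finset.sum_congr rfl fun y _ =>
    Finset.sum_congr rfl fun a _ => Finset.sum_congr rfl fun b _ => ?_
  refine le_antisymm (sum_le_sum_of_update j _ _ fun d => ?_)
    (sum_le_sum_of_update j _ _ fun d => ?_) <;>
  · simp [hf, Sample.d, two_mul]

/-! ### The likelihood ratios of the game -/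

lemma likelihood_nonneg {Λ ρ η α : Type*} [Fintype Λ] {P : Λ → ℝ} (hP : ∀ s, 0 ≤ P s)
    (E : Λ → Prop) (R : Λ → ρ) (Y : Λ → η) (A : Λ → α) {κ : ρ → η → ℝ} (hκ : ∀ r y, 0 ≤ κ r y)
    (s : Λ) : 0 ≤ likelihood P E R Y A κ s :=
  div_nonneg (pr_nonneg hP _) (mul_nonneg (pr_nonneg hP _) (hκ _ _))

lemma likelihood_pos {Λ ρ η α : Type*} [Fintype Λ] {P : Λ → ℝ} (hP : ∀ s, 0 ≤ P s)
    (E : Λ → Prop) (R : Λ → ρ) (Y : Λ → η) (A : Λ → α) {κ : ρ → η → ℝ}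
    {s : Λ} (hs : 0 < P s) (hE : E s) (hκ : 0 < κ (R s) (Y s)) :
    0 < likelihood P E R Y A κ s :=
  div_pos (pr_pos hP hs ⟨hE, rfl⟩) (mul_pos (pr_pos hP hs ⟨hE, rfl⟩) hκ)

lemma likelihood_congr {Λ ρ η α : Type*} [Fintype Λ] (P : Λ → ℝ)
    (E : Λ → Prop) (R : Λ → ρ) (Y : Λ → η) (A : Λ → α) (κ : ρ → η → ℝ) {s t : Λ}
    (hR : R s = R t) (hY : Y s = Y t) (hA : A s = A t) :
    likelihood P E R Y A κ s = likelihood P E R Y A κ t := by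
  unfold likelihood
  rw [hR, hY, hA]

/-- The conditional law `μ(y | x)` of Bob's question given Alice's (`0` if `x` has mass `0`),
as a function of a tuple whose first entry is `x`. -/
def condMu {𝒳 𝒴 ρ : Type*} [Fintype 𝒴] (μ : 𝒳 × 𝒴 → ℝ) (r : 𝒳 × ρ) (y : 𝒴) : ℝ :=
  μ (r.1, y) / ∑ v, μ (r.1, v)

lemma condMu_pos {𝒳 𝒴 𝒜 ℬ ρ : Type*} [Fintype 𝒴] {n : ℕ} (μ : 𝒳 × 𝒴 → ℝ) (hμ0 : ∀ p, 0 ≤ μ p)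
    (q : (Fin n → 𝒳) → (Fin n → 𝒴) → (Fin n → 𝒜) × (Fin n → ℬ) → ℝ)
    (s : Sample 𝒳 𝒴 𝒜 ℬ n) (hs : jointP μ q s ≠ 0) (j : Fin n) (r : ρ) :
    0 < condMu μ (s.x j, r) (s.y j) := by
  have h1 : μ (s.x j, s.y j) ≠ 0 :=
    Finset.prod_ne_zero_iff.1 (left_ne_zero_of_mul (left_ne_zero_of_mul hs)) j (Finset.mem_univ j)
  have h2 : 0 < μ (s.x j, s.y j) := lt_of_le_of_ne (hμ0 _) h1.symm
  exact div_pos h2 (Finset.sum_pos' (fun v _ => hμ0 _) ⟨s.y j, Finset.mem_univ _, h2⟩)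

/-- `P(Y_j | A_j, X_j, R_{Tj}, E) / μ(Y_j | X_j)` at the sample `s`. -/
def roundRatio (μ : 𝒳 × 𝒴 → ℝ)
    (q : (Fin n → 𝒳) → (Fin n → 𝒴) → (Fin n → 𝒜) × (Fin n → ℬ) → ℝ)
    (E : Sample 𝒳 𝒴 𝒜 ℬ n → Prop) (S T : Finset (Fin n)) (j : Fin n)
    (s : Sample 𝒳 𝒴 𝒜 ℬ n) : ℝ :=
  likelihood (jointP μ q) E (fun s => (s.x j, rRV S T j s)) (fun s => s.y j) (fun s => s.a j)
    (condMu μ) s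

lemma rRV_update_y {𝒳 𝒴 𝒜 ℬ : Type*} {n : ℕ} (S T : Finset (Fin n)) (j k : Fin n)
    (x : Fin n → 𝒳) (y : Fin n → 𝒴)
    (a : Fin n → 𝒜) (b : Fin n → ℬ) (d : Fin n → Bool) (hk : k ∉ S) (hd : d k = true) (v : 𝒴) :
    rRV S T j ((x, Function.update y k v, a, b, d) : Sample 𝒳 𝒴 𝒜 ℬ n)
      = rRV S T j (x, y, a, b, d) := by
  have h1 : omegaMinusRV S j ((x, Function.update y k v, a, b, d) : Sample 𝒳 𝒴 𝒜 ℬ n)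
      = omegaMinusRV S j (x, y, a, b, d) := by
    refine Prod.ext ?_ (Prod.ext rfl ?_)
    · funext i
      by_cases hi : i.1 = k
      · simp [omegaMinusRV, Sample.d, hi, hd, Sample.x]
      · by_cases h : d i.1 = true <;>
          simp [omegaMinusRV, Sample.d, Sample.y, Function.update_of_ne hi, Sample.x, h]
    · funext i
      have hi : i.1 ≠ k := fun h => hk (h ▸ i.2)
      simp [omegaMinusRV, Sample.y, Function.update_of_ne hi]
  unfold rRV
  rw [h1]
  rfl

lemma rRV_update_d {𝒳 𝒴 𝒜 ℬ : Type*} {n : ℕ} (S T : Finset (Fin n)) (j : Fin n)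
    (x : Fin n → 𝒳) (y : Fin n → 𝒴)
    (a : Fin n → 𝒜) (b : Fin n → ℬ) (d : Fin n → Bool) (v : Bool) :
    rRV S T j ((x, y, a, b, Function.update d j v) : Sample 𝒳 𝒴 𝒜 ℬ n)
      = rRV S T j (x, y, a, b, d) := by
  have h1 : omegaMinusRV S j ((x, y, a, b, Function.update d j v) : Sample 𝒳 𝒴 𝒜 ℬ n)
      = omegaMinusRV S j (x, y, a, b, d) := by
    refine Prod.ext ?_ rfl
    funext i
    by_cases h : d i.1 = true <;>
      simp [omegaMinusRV, Sample.d, Function.update_of_ne i.2, Sample.x, Sample.y, h]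
  unfold rRV
  rw [h1]
  rfl

lemma rRV_congr_b {𝒳 𝒴 𝒜 ℬ : Type*} {n : ℕ} (S T : Finset (Fin n)) (j : Fin n)
    (x : Fin n → 𝒳) (y : Fin n → 𝒴)
    (a : Fin n → 𝒜) (b b' : Fin n → ℬ) (d : Fin n → Bool) (h : ∀ i ∈ S, b i = b' i) :
    rRV S T j ((x, y, a, b, d) : Sample 𝒳 𝒴 𝒜 ℬ n) = rRV S T j (x, y, a, b', d) := by
  refine Prod.ext rfl (Prod.ext rfl (Prod.ext rfl ?_))
  funext i
  exact h i.1 i.2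

/-- Integrating the ratio of round `j` against `μ(x_j, ·)` gives at most the mass of `x_j`: it is
the conditional law of `Y_j` relative to `μ(· | x_j)`. -/
lemma sum_mu_mul_roundRatio_le (μ : 𝒳 × 𝒴 → ℝ) (hμ0 : ∀ p, 0 ≤ μ p)
    (q : (Fin n → 𝒳) → (Fin n → 𝒴) → (Fin n → 𝒜) × (Fin n → ℬ) → ℝ)
    (hq0 : ∀ x y ab, 0 ≤ q x y ab) (E : Sample 𝒳 𝒴 𝒜 ℬ n → Prop) (S T : Finset (Fin n))
    (j : Fin n) (x : Fin n → 𝒳) (y : Fin n → 𝒴) (a : Fin n → 𝒜) (b : Fin n → ℬ)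
    (d : Fin n → Bool) (hj : j ∉ S) (hd : d j = true) :
    ∑ v, μ (x j, v) * roundRatio μ q E S T j (x, Function.update y j v, a, b, d)
      ≤ ∑ v, μ (x j, v) := by
  have hP := jointP_nonneg μ hμ0 q hq0
  set M := ∑ v, μ (x j, v) with hM
  have hM0 : 0 ≤ M := Finset.sum_nonneg fun v _ => hμ0 _
  let r : 𝒳 × RType 𝒳 𝒴 𝒜 ℬ S T j := (x j, rRV S T j (x, y, a, b, d))
  set F' := pr (jointP μ q) (fun t => E t ∧ ((t.x j, rRV S T j t), t.a j) = (r, a j)) with hF'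
  let F : 𝒴 → ℝ := fun v =>
    pr (jointP μ q) (fun t => E t ∧ ((t.x j, rRV S T j t), t.y j, t.a j) = (r, v, a j))
  have hF : ∑ v, F v = F' := by
    rw [hF', ← sum_pr_eq _ _ (fun t => t.y j)]
    refine Finset.sum_congr rfl fun v _ => ?_
    simp only [F]
    congr 1
    funext s
    simp only [Prod.ext_iff, eq_iff_iff]
    tauto
  have hφ : ∀ v, roundRatio μ q E S T j (x, Function.update y j v, a, b, d)
      = F v / (F' * (μ (x j, v) / M)) := by
    intro v
    unfold roundRatio likelihood
    simp only [rRV_update_y S T j j x y a b d hj hd v]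
    simp [F, F', r, condMu, Sample.x, Sample.y, Sample.a, M]
  have h1 : ∀ v, μ (x j, v) * roundRatio μ q E S T j (x, Function.update y j v, a, b, d)
      ≤ M * (F v / F') := by
    intro v
    have hFv : 0 ≤ F v := pr_nonneg hP _
    have hF'0 : 0 ≤ F' := pr_nonneg hP _
    rw [hφ]
    by_cases h : μ (x j, v) = 0
    · rw [h, zero_mul]; positivity
    · rw [div_mul_eq_div_div, div_div_eq_mul_div, mul_div_cancel₀ _ h, mul_comm]
  calc _ ≤ ∑ v, M * (F v / F') := Finset.sum_le_sum fun v _ => h1 v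
    _ = M * (F' / F') := by rw [← Finset.mul_sum, ← Finset.sum_div, hF]
    _ ≤ M * 1 := mul_le_mul_of_nonneg_left (div_self_le_one _) hM0
    _ = M := mul_one _

/-- The contribution of round `j`, bounded by a log-likelihood on the event `D_j = Alice`.
The factor `2` is `1 / P(D_j = Alice)`. -/
lemma round_contribution_le (μ : 𝒳 × 𝒴 → ℝ) (hμ0 : ∀ p, 0 ≤ μ p)
    (q : (Fin n → 𝒳) → (Fin n → 𝒴) → (Fin n → 𝒜) × (Fin n → ℬ) → ℝ)
    (hq0 : ∀ x y ab, 0 ≤ q x y ab) (E : Sample 𝒳 𝒴 𝒜 ℬ n → Prop)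
    (hE : ∀ x y a b d d', E (x, y, a, b, d) ↔ E (x, y, a, b, d'))
    (hW : 0 < pr (jointP μ q) E) (S T : Finset (Fin n)) (j : Fin n) :
    ∑ p : 𝒳 × RType 𝒳 𝒴 𝒜 ℬ S T j,
        condDist (jointP μ q) (fun s => (s.x j, rRV S T j s)) (fun s => E s ∧ s.d j = true) p *
          mutualInfo (condDist (jointP μ q) (fun s => (s.y j, s.a j))
            (fun s => E s ∧ (s.x j, rRV S T j s) = p))
      ≤ 2 / pr (jointP μ q) E * ∑ s, if s.d j = true then
          (if E s then jointP μ q s else 0) * Real.logb 2 (roundRatio μ q E S T j s) else 0 := by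
  have hP := jointP_nonneg μ hμ0 q hq0
  have hPd : ∀ x y a b d d', jointP μ q (x, y, a, b, d) = jointP μ q (x, y, a, b, d') :=
    fun _ _ _ _ _ _ => rfl
  have hcoin : ∀ E' : Sample 𝒳 𝒴 𝒜 ℬ n → Prop,
      (∀ x y a b d v, E' (x, y, a, b, Function.update d j v) ↔ E' (x, y, a, b, d)) →
      pr (jointP μ q) E' = 2 * pr (jointP μ q) (fun s => E' s ∧ s.d j = true) := by
    intro E' hE'
    unfold pr
    rw [sum_eq_two_mul_sum_coin j _ fun x y a b d v => by
      simp only [hE', hPd x y a b (Function.update d j v) d]]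
    congr 1
    refine Finset.sum_congr rfl fun s _ => ?_
    by_cases h1 : E' s <;> by_cases h2 : s.d j = true <;> simp [h1, h2]
  have hc : ∀ p, condDist (jointP μ q) (fun s => (s.x j, rRV S T j s))
      (fun s => E s ∧ s.d j = true) p
      = pr (jointP μ q) (fun s => E s ∧ (s.x j, rRV S T j s) = p) / pr (jointP μ q) E := by
    intro p
    rw [hcoin E fun _ _ _ _ _ _ => hE _ _ _ _ _ _,
      hcoin (fun s => E s ∧ (s.x j, rRV S T j s) = p) fun x y a b d v => by
        rw [rRV_update_d, hE x y a b _ d]; rfl,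
      mul_div_mul_left _ _ (two_ne_zero)]
    unfold condDist
    congr 2
    funext s
    simp only [eq_iff_iff]
    tauto
  have hκ : ∀ (r : 𝒳 × RType 𝒳 𝒴 𝒜 ℬ S T j) y, 0 ≤ condMu μ r y := fun r y =>
    div_nonneg (hμ0 _) (Finset.sum_nonneg fun _ _ => hμ0 _)
  have h1 := sum_mutualInfo_le (jointP μ q) hP E (fun s => (s.x j, rRV S T j s)) (fun s => s.y j)
    (fun s => s.a j) (condMu μ) hκ
    (fun r => by unfold condMu; rw [← Finset.sum_div]; exact div_self_le_one _)
    (fun s _ hs => condMu_pos μ hμ0 q s hs j _)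
  simp_rw [hc, div_mul_eq_mul_div]
  rw [← Finset.sum_div, div_le_div_iff_of_pos_right hW]
  refine h1.trans (le_of_eq ?_)
  rw [sum_eq_two_mul_sum_coin j]
  · congr 1
    refine Finset.sum_congr rfl fun s _ => ?_
    by_cases h1 : E s <;> by_cases h2 : s.d j = true <;> simp [h1, h2, roundRatio]
  · intro x y a b d v
    rw [likelihood_congr (t := (x, y, a, b, d))]
    · simp only [hE x y a b _ d, hPd x y a b (Function.update d j v) d]
    · simp only [rRV_update_d]; rfl
    · rfl
    · rfl

/-- The sum of the round contributions: Jensen's inequality applied to the product of the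
likelihood ratios over the rounds with `D_j = Alice`. -/
lemma sum_round_le (μ : 𝒳 × 𝒴 → ℝ) (hμ0 : ∀ p, 0 ≤ μ p) (hμ1 : ∑ p, μ p = 1)
    (q : (Fin n → 𝒳) → (Fin n → 𝒴) → (Fin n → 𝒜) × (Fin n → ℬ) → ℝ)
    (hq0 : ∀ x y ab, 0 ≤ q x y ab) (hq1 : ∀ x y, ∑ ab, q x y ab = 1)
    (hNSA : ∀ x y y' a, (∑ b, q x y (a, b)) = ∑ b, q x y' (a, b))
    (E : Sample 𝒳 𝒴 𝒜 ℬ n → Prop)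
    (hE : ∀ x y a b d d', E (x, y, a, b, d) ↔ E (x, y, a, b, d'))
    (hW : 0 < pr (jointP μ q) E) (S T U : Finset (Fin n)) (hU : Disjoint U S) :
    ∑ j ∈ U, ∑ p : 𝒳 × RType 𝒳 𝒴 𝒜 ℬ S T j,
        condDist (jointP μ q) (fun s => (s.x j, rRV S T j s)) (fun s => E s ∧ s.d j = true) p *
          mutualInfo (condDist (jointP μ q) (fun s => (s.y j, s.a j))
            (fun s => E s ∧ (s.x j, rRV S T j s) = p))
      ≤ 2 * Real.logb 2 ((Fintype.card ℬ : ℝ) ^ S.card / pr (jointP μ q) E) := by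
  have hP := jointP_nonneg μ hμ0 q hq0
  obtain ⟨s₀, -, -⟩ := Finset.exists_ne_zero_of_sum_ne_zero hW.ne'
  let J : (Fin n → Bool) → Finset (Fin n) := fun d => U.filter fun j => d j = true
  let φ := roundRatio μ q E S T
  let w : Sample 𝒳 𝒴 𝒜 ℬ n → ℝ := fun s => if E s then jointP μ q s else 0
  have hw : ∀ s, 0 ≤ w s := fun s => by simp only [w]; split_ifs <;> simp [hP s]
  have hφ0 : ∀ j s, 0 ≤ φ j s := fun j s => likelihood_nonneg hP _ _ _ _
    (fun r y => div_nonneg (hμ0 _) (Finset.sum_nonneg fun _ _ => hμ0 _)) s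
  have hφpos : ∀ j s, w s ≠ 0 → 0 < φ j s := by
    intro j s hs
    simp only [w, ne_eq, ite_eq_right_iff, Classical.not_imp] at hs
    exact likelihood_pos hP _ _ _ _ (lt_of_le_of_ne (hP s) (Ne.symm hs.2)) hs.1
      (condMu_pos μ hμ0 q s hs.2 j _)
  have hJ : ∀ d j, j ∈ J d → j ∉ S ∧ d j = true := fun d j hj =>
    ⟨Finset.disjoint_left.1 hU (Finset.mem_filter.1 hj).1, (Finset.mem_filter.1 hj).2⟩
  have hmass : ∑ s, w s * ∏ j ∈ J s.d, φ j s ≤ (Fintype.card ℬ : ℝ) ^ S.card := by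
    refine le_trans (Finset.sum_le_sum fun s _ => mul_le_mul_of_nonneg_right ?_
      (Finset.prod_nonneg fun j _ => hφ0 j s))
      (sum_jointP_mul_prod_le μ hμ0 hμ1 q hq0 hq1 hNSA S s₀.y s₀.b J φ hφ0 ?_ ?_ ?_)
    · simp only [w]; split_ifs <;> simp [hP s]
    · intro x y a b b' d h j
      refine likelihood_congr _ _ _ _ _ _ ?_ rfl rfl
      simp only [rRV_congr_b S T j x y a b b' d h]; rfl
    · intro x y a b d j hj k hk hkj v
      refine likelihood_congr _ _ _ _ _ _ ?_ (Function.update_of_ne hkj.symm _ _) rfl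
      simp only [rRV_update_y S T j k x y a b d (hJ d k hk).1 (hJ d k hk).2 v]; rfl
    · intro x y a b d j hj
      exact sum_mu_mul_roundRatio_le μ hμ0 q hq0 E S T j x y a b d (hJ d j hj).1 (hJ d j hj).2
  have hK : 0 < (Fintype.card ℬ : ℝ) ^ S.card := by
    rcases S.eq_empty_or_nonempty with rfl | ⟨i, _⟩
    · simp
    · have : 0 < Fintype.card ℬ := Fintype.card_pos_iff.2 ⟨s₀.b i⟩
      positivity
  have hjensen := sum_mul_logb_le w (fun s => ∏ j ∈ J s.d, φ j s) hw
    (fun s hs => Finset.prod_pos fun j _ => hφpos j s hs) _ hK hW hmass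
  have hsum : ∑ s, w s * Real.logb 2 (∏ j ∈ J s.d, φ j s)
      = ∑ j ∈ U, ∑ s, if s.d j = true then w s * Real.logb 2 (φ j s) else 0 := by
    rw [Finset.sum_comm]
    refine Finset.sum_congr rfl fun s _ => ?_
    rw [← Finset.sum_filter, ← Finset.mul_sum]
    by_cases hs : w s = 0
    · rw [hs, zero_mul, zero_mul]
    · rw [Real.logb_prod _ _ fun j _ => (hφpos j s hs).ne']
  calc _ ≤ ∑ j ∈ U, 2 / pr (jointP μ q) E * ∑ s, (if s.d j = true then
          w s * Real.logb 2 (φ j s) else 0) :=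
        Finset.sum_le_sum fun j _ => round_contribution_le μ hμ0 q hq0 E hE hW S T j
    _ = 2 / pr (jointP μ q) E * ∑ s, w s * Real.logb 2 (∏ j ∈ J s.d, φ j s) := by
        rw [hsum, Finset.mul_sum]
    _ ≤ 2 / pr (jointP μ q) E * (pr (jointP μ q) E *
          Real.logb 2 ((Fintype.card ℬ : ℝ) ^ S.card / pr (jointP μ q) E)) :=
        mul_le_mul_of_nonneg_left hjensen (by positivity)
    _ = _ := by rw [← mul_assoc, div_mul_cancel₀ _ hW.ne']

/-- The mutual-information bound (equation (24)) from the proof of the paper's Lemma 3.5: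
with `W = W_S^{≥1-τ}`, `m = n - |S|` and
`δ' = (1/((1-β)m))·(log₂(1/P(W)) + (2|S| + βm)·log₂|𝒜 × ℬ|)`, for every `T ⊆ [n]∖S` with
`|T| ≤ βm`, on average over a uniform `j ∈ [n]∖(T∪S)` and over
`(x_j, ω_{-j}, x_T, a_{S∪T}, b_S)` drawn from `P` conditioned on `W` and on `D_j = Alice`,
the mutual information between `Y_j` and `A_j` — computed under `P` conditioned on `W`,
`Ω_{-j} = ω_{-j}`, `X_j = x_j`, `X_T = x_T`, `A_{S∪T} = a_{S∪T}`, `B_S = b_S` — is at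
most `2δ'`. -/
theorem mutual_information_bound
    {𝒳 𝒴 𝒜 ℬ : Type*} [Fintype 𝒳] [Fintype 𝒴] [Fintype 𝒜] [Fintype ℬ] {n : ℕ}
    (μ : 𝒳 × 𝒴 → ℝ) (hμ0 : ∀ p, 0 ≤ μ p) (hμ1 : ∑ p, μ p = 1)
    (q : (Fin n → 𝒳) → (Fin n → 𝒴) → (Fin n → 𝒜) × (Fin n → ℬ) → ℝ)
    (hq0 : ∀ x y ab, 0 ≤ q x y ab) (hq1 : ∀ x y, ∑ ab, q x y ab = 1)
    (hNSA : ∀ x y y' a, (∑ b, q x y (a, b)) = ∑ b, q x y' (a, b))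
    (hNSB : ∀ x x' y b, (∑ a, q x y (a, b)) = ∑ a, q x' y (a, b))
    (V : 𝒳 → 𝒴 → 𝒜 → ℬ → Prop)
    (S : Finset (Fin n)) (τ : ℝ) (hτ0 : 0 ≤ τ) (hτ1 : τ ≤ 1)
    (hW : 0 < pr (jointP μ q) (winS V S τ))
    (β : ℝ) (hβ0 : 0 < β) (hβ1 : β < 1)
    (T : Finset (Fin n)) (hTS : Disjoint T S)
    (hT : (T.card : ℝ) ≤ β * ((n - S.card : ℕ) : ℝ)) :
    (∑ j ∈ Finset.univ \ (T ∪ S),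
        ∑ p : 𝒳 × OmegaMinusType 𝒳 𝒴 S j × ({i : Fin n // i ∈ T} → 𝒳) ×
            ({i : Fin n // i ∈ S ∪ T} → 𝒜) × ({i : Fin n // i ∈ S} → ℬ),
          condDist (jointP μ q)
              (fun s => (s.x j, omegaMinusRV S j s,
                (fun i : {i : Fin n // i ∈ T} => s.x i.1),
                (fun i : {i : Fin n // i ∈ S ∪ T} => s.a i.1),
                (fun i : {i : Fin n // i ∈ S} => s.b i.1)))
              (fun s => winS V S τ s ∧ s.d j = true) p *
            mutualInfo
              (condDist (jointP μ q) (fun s => (s.y j, s.a j))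
                (fun s => winS V S τ s ∧ omegaMinusRV S j s = p.2.1 ∧ s.x j = p.1 ∧
                  (fun i : {i : Fin n // i ∈ T} => s.x i.1) = p.2.2.1 ∧
                  (fun i : {i : Fin n // i ∈ S ∪ T} => s.a i.1) = p.2.2.2.1 ∧
                  (fun i : {i : Fin n // i ∈ S} => s.b i.1) = p.2.2.2.2)))
      / ((Finset.univ \ (T ∪ S)).card : ℝ)
    ≤ 2 * ((1 / ((1 - β) * ((n - S.card : ℕ) : ℝ))) *
        (Real.logb 2 (1 / pr (jointP μ q) (winS V S τ)) +
          (2 * (S.card : ℝ) + β * ((n - S.card : ℕ) : ℝ)) *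
            Real.logb 2 (Fintype.card (𝒜 × ℬ) : ℝ))) := by
  have hmain := sum_round_le μ hμ0 hμ1 q hq0 hq1 hNSA (winS V S τ)
    (fun _ _ _ _ _ _ => Iff.rfl) hW S T (Finset.univ \ (T ∪ S))
    (Finset.disjoint_of_subset_right Finset.subset_union_right Finset.sdiff_disjoint)
  set W := pr (jointP μ q) (winS V S τ) with hWd
  obtain ⟨s₀, -, -⟩ := Finset.exists_ne_zero_of_sum_ne_zero hW.ne'
  set m : ℕ := n - S.card with hm
  have hcard : ((Finset.univ \ (T ∪ S)).card : ℝ) = m - T.card := by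
    have h1 := Finset.card_sdiff_add_card_eq_card (Finset.subset_univ (T ∪ S))
    rw [Finset.card_union_of_disjoint hTS, Finset.card_univ, Fintype.card_fin] at h1
    have h2 : (Finset.univ \ (T ∪ S)).card + T.card = m := by omega
    rw [← h2]; push_cast; ring
  have hcard' : (1 - β) * m ≤ ((Finset.univ \ (T ∪ S)).card : ℝ) := by rw [hcard]; linarith
  -- The conditioning tuples, written out as conjunctions.
  have hev : ∀ j (p : 𝒳 × RType 𝒳 𝒴 𝒜 ℬ S T j),
      (fun s : Sample 𝒳 𝒴 𝒜 ℬ n => winS V S τ s ∧ omegaMinusRV S j s = p.2.1 ∧ s.x j = p.1 ∧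
        (fun i : {i : Fin n // i ∈ T} => s.x i.1) = p.2.2.1 ∧
        (fun i : {i : Fin n // i ∈ S ∪ T} => s.a i.1) = p.2.2.2.1 ∧
        (fun i : {i : Fin n // i ∈ S} => s.b i.1) = p.2.2.2.2)
      = fun s => winS V S τ s ∧ (s.x j, rRV S T j s) = p := by
    intro j p
    funext s
    rw [Prod.ext_iff (x := (s.x j, rRV S T j s)), Prod.ext_iff (x := (s.x j, rRV S T j s).2),
      Prod.ext_iff (x := (s.x j, rRV S T j s).2.2), Prod.ext_iff (x := (s.x j, rRV S T j s).2.2.2)]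
    simp only [rRV, eq_iff_iff]
    tauto
  simp_rw [hev]
  rcases Nat.eq_zero_or_pos m with h0 | h0
  · have hm0 : (m : ℝ) = 0 := by exact_mod_cast h0
    have hz : ((Finset.univ \ (T ∪ S)).card : ℝ) = 0 := by
      have : (0 : ℝ) ≤ T.card := Nat.cast_nonneg _
      have : (0 : ℝ) ≤ ((Finset.univ \ (T ∪ S)).card : ℝ) := Nat.cast_nonneg _
      rw [hm0] at hcard
      linarith
    rw [hz, hm0]
    simp
  have hm0 : (0 : ℝ) < m := by exact_mod_cast h0
  have hpos : 0 < (1 - β) * m := mul_pos (by linarith) hm0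
  have hn : 0 < n := by omega
  have hA : 1 ≤ Fintype.card 𝒜 := Fintype.card_pos_iff.2 ⟨s₀.a ⟨0, hn⟩⟩
  have hB : 1 ≤ Fintype.card ℬ := Fintype.card_pos_iff.2 ⟨s₀.b ⟨0, hn⟩⟩
  have hBR : (1 : ℝ) ≤ Fintype.card ℬ := by exact_mod_cast hB
  have hlB : 0 ≤ Real.logb 2 (Fintype.card ℬ : ℝ) := Real.logb_nonneg (by norm_num) hBR
  have hlAB : Real.logb 2 (Fintype.card ℬ : ℝ) ≤ Real.logb 2 (Fintype.card (𝒜 × ℬ) : ℝ) := by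
    refine Real.logb_le_logb_of_le (by norm_num) (by linarith) ?_
    rw [Fintype.card_prod]
    exact_mod_cast Nat.le_mul_of_pos_left _ hA
  have hW1 : W ≤ 1 := by
    have h := sum_jointP_mul_prod_le μ hμ0 hμ1 q hq0 hq1 hNSA ∅ s₀.y s₀.b (fun _ => ∅)
      (fun _ _ => 0) (by simp) (by simp) (by simp) (by simp)
    simp only [Finset.prod_empty, mul_one, Finset.card_empty, pow_zero] at h
    refine le_trans (Finset.sum_le_sum fun s _ => ?_) h
    split_ifs
    · exact le_rfl
    · exact jointP_nonneg μ hμ0 q hq0 s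
  have hlW : 0 ≤ Real.logb 2 (1 / W) :=
    Real.logb_nonneg (by norm_num) ((one_le_div hW).2 hW1)
  have hsplit : Real.logb 2 ((Fintype.card ℬ : ℝ) ^ S.card / W)
      = Real.logb 2 (1 / W) + S.card * Real.logb 2 (Fintype.card ℬ : ℝ) := by
    rw [Real.logb_div (by positivity) hW.ne', Real.logb_pow, Real.logb_div one_ne_zero hW.ne',
      Real.logb_one]
    ring
  set L := Real.logb 2 (Fintype.card (𝒜 × ℬ) : ℝ)
  have hS : (0 : ℝ) ≤ S.card := Nat.cast_nonneg _
  have hbound : Real.logb 2 ((Fintype.card ℬ : ℝ) ^ S.card / W)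
      ≤ Real.logb 2 (1 / W) + (2 * S.card + β * m) * L := by
    rw [hsplit]
    have h1 : (S.card : ℝ) * Real.logb 2 (Fintype.card ℬ : ℝ) ≤ S.card * L := by gcongr
    have h2 : (0 : ℝ) ≤ (S.card + β * m) * L :=
      mul_nonneg (by positivity) (hlB.trans hlAB)
    linarith
  have hnum : 0 ≤ 2 * Real.logb 2 ((Fintype.card ℬ : ℝ) ^ S.card / W) := by
    rw [hsplit]; positivity
  calc _ ≤ 2 * Real.logb 2 ((Fintype.card ℬ : ℝ) ^ S.card / W) /
          ((Finset.univ \ (T ∪ S)).card : ℝ) :=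
        div_le_div_of_nonneg_right hmain (Nat.cast_nonneg _)
    _ ≤ 2 * Real.logb 2 ((Fintype.card ℬ : ℝ) ^ S.card / W) / ((1 - β) * m) :=
        div_le_div_of_nonneg_left hnum hpos hcard'
    _ ≤ 2 * (Real.logb 2 (1 / W) + (2 * S.card + β * m) * L) / ((1 - β) * m) := by gcongr
    _ = _ := by ring

end
end

section
/- Let R be a random subset of [n] on some probability space, let 0 ≤ γ < τ ≤ 1, and let κ = P(|R| ≥ (1−γ)n) > 0. For a tuple S = (S_1, …, S_t) of elements of [n], let W_S^{≥1−τ} denote the event |{k ∈ [t] : S_k ∈ R}| ≥ (1−τ)t, and call S 'bad' if P(W_S^{≥1−τ}) < κ/2 (probability over R). Assume exp(−(τ−γ)²·t/3) ≤ 1/4. Then, if S_1, …, S_t are drawn independently and uniformly from [n], independently of R, the probability that S is bad is at most exp(−(τ−γ)²·t/6). -/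
/-!
Write `δ = τ - γ`. If `r ⊆ [n]` has at least `(1-γ)n` elements, a uniform tuple `S` falls in
`r` fewer than `(1-τ)t` times with probability at most `exp(-δ²t/3)`: this is a Chernoff bound
(`card_tuples_le`), obtained by expanding `(∑ i, exp(λ·[i ∉ r]))^t` over tuples with `λ = 2δ/3`.

Let `B` be the set of bad tuples. Every outcome `ω` with `|R ω| ≥ (1-γ)n` lies in `W_S` for all
but `n^t exp(-δ²t/3)` of the tuples `S ∈ B`, so Markov's inequality for the number of such `S`
(`markov_card`) gives `(|B| - n^t exp(-δ²t/3)) κ ≤ ∑_{S ∈ B} P(W_S) ≤ |B| κ / 2`. Hence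
`|B| / n^t ≤ 2 exp(-δ²t/3) ≤ exp(-δ²t/6)`, the last step because `exp(-δ²t/6) ≤ 1/2`.

The random set `R` is not assumed measurable, so `μ` acts as an outer measure on the events;
Markov's inequality is therefore applied to measurable hulls of the events `W_S`.
-/

open Finset MeasureTheory
open scoped Classical

/-- The constant `3/4` is what makes the Chernoff exponent come out as `1/3`. -/
lemma exp_le_quadratic {x : ℝ} (h0 : 0 ≤ x) (h1 : x ≤ 1) :
    Real.exp x ≤ 1 + x + 3 / 4 * x ^ 2 := by
  have h := Real.exp_bound' h0 h1 (n := 3) (by norm_num)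
  norm_num [Finset.sum_range_succ, Nat.factorial] at h
  nlinarith [mul_nonneg (sq_nonneg x) (sub_nonneg.2 h1), sq_nonneg x]

/-- Chernoff bound for sampling with replacement: few tuples fall in the large set `r` fewer
than `(1-τ)t` times. -/
lemma card_tuples_le (n t : ℕ) (hn : 1 ≤ n) (γ τ : ℝ) (hγ0 : 0 ≤ γ) (hγτ : γ < τ) (hτ1 : τ ≤ 1)
    (r : Finset (Fin n)) (hr : (1 - γ) * (n : ℝ) ≤ (r.card : ℝ)) :
    ((univ.filter (fun S : Fin t → Fin n =>
      ¬ (1 - τ) * (t : ℝ) ≤ ((univ.filter (fun k => S k ∈ r)).card : ℝ))).card : ℝ)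
      ≤ (n : ℝ) ^ t * Real.exp (-(τ - γ) ^ 2 * t / 3) := by
  have hn' : (0 : ℝ) < n := by exact_mod_cast hn
  set l : ℝ := 2 * (τ - γ) / 3 with hl
  have hl0 : 0 ≤ l := by rw [hl]; linarith
  have hl1 : l ≤ 1 := by rw [hl]; linarith
  set w : Fin n → ℝ := fun i => if i ∈ r then 1 else Real.exp l with hw
  have hwpos : ∀ i, 0 < w i := fun i => by simp only [hw]; split_ifs <;> positivity
  have hsum : ∑ i, w i ≤ n * Real.exp (γ * l + 3 / 4 * l ^ 2) := by
    have hcard : ((univ.filter (fun i => i ∉ r)).card : ℝ) = n - r.card := by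
      have h := Finset.card_filter_add_card_filter_not (s := (univ : Finset (Fin n)))
        (fun i => i ∈ r)
      simp only [Finset.filter_univ_mem, Finset.card_univ, Fintype.card_fin] at h
      rw [eq_sub_iff_add_eq, add_comm]
      exact_mod_cast h
    have h1 : ∑ i, w i = n + (n - r.card) * (Real.exp l - 1) := by
      simp only [hw]
      rw [Finset.sum_ite, Finset.sum_const, Finset.sum_const, nsmul_eq_mul, nsmul_eq_mul, hcard,
        Finset.filter_univ_mem]
      ring
    have h2 := exp_le_quadratic hl0 hl1
    have h3 : (0 : ℝ) ≤ Real.exp l - 1 := by linarith [Real.add_one_le_exp l]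
    have h4 := Real.add_one_le_exp (γ * l + 3 / 4 * l ^ 2)
    calc ∑ i, w i = n + (n - r.card) * (Real.exp l - 1) := h1
      _ ≤ n + (γ * n) * (Real.exp l - 1) := by gcongr; linarith
      _ ≤ n + (γ * n) * (l + 3 / 4 * l ^ 2) := by gcongr; linarith
      _ = n * (γ * l + γ * (3 / 4 * l ^ 2) + 1) := by ring
      _ ≤ n * (γ * l + 1 * (3 / 4 * l ^ 2) + 1) := by gcongr; linarith
      _ ≤ n * Real.exp (γ * l + 3 / 4 * l ^ 2) := by gcongr; linarith
  have hprod : ∀ S : Fin t → Fin n,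
      ∏ k, w (S k) = Real.exp (l * (t - ((univ.filter (fun k => S k ∈ r)).card : ℝ))) := by
    intro S
    have h := Finset.card_filter_add_card_filter_not (s := (univ : Finset (Fin t)))
      (fun k => S k ∈ r)
    simp only [Finset.card_univ, Fintype.card_fin] at h
    have h' : (t : ℝ) - ((univ.filter (fun k => S k ∈ r)).card : ℝ)
        = ((univ.filter (fun k => S k ∉ r)).card : ℝ) := by
      rw [sub_eq_iff_eq_add, add_comm]; exact_mod_cast h.symm
    simp only [hw]
    rw [h', Finset.prod_ite, Finset.prod_const_one, one_mul, Finset.prod_const,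
      ← Real.exp_nat_mul, mul_comm]
  set F := univ.filter (fun S : Fin t → Fin n =>
      ¬ (1 - τ) * (t : ℝ) ≤ ((univ.filter (fun k => S k ∈ r)).card : ℝ)) with hF
  have hlow : (F.card : ℝ) * Real.exp (l * (τ * t)) ≤ (∑ i, w i) ^ t := by
    rw [Fintype.sum_pow, ← nsmul_eq_mul, ← Finset.sum_const]
    calc ∑ S ∈ F, Real.exp (l * (τ * t)) ≤ ∑ S ∈ F, ∏ k, w (S k) := by
          refine Finset.sum_le_sum fun S hS => ?_
          have hS' := (Finset.mem_filter.1 hS).2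
          rw [hprod]
          gcongr
          linarith
      _ ≤ ∑ S : Fin t → Fin n, ∏ k, w (S k) :=
          Finset.sum_le_sum_of_subset_of_nonneg (Finset.subset_univ _)
            fun S _ _ => Finset.prod_nonneg fun k _ => (hwpos _).le
  have hup : (∑ i, w i) ^ t ≤ (n : ℝ) ^ t * Real.exp (t * (γ * l + 3 / 4 * l ^ 2)) := by
    rw [Real.exp_nat_mul, ← mul_pow]
    exact pow_le_pow_left₀ (Finset.sum_nonneg fun i _ => (hwpos i).le) hsum t
  have hexp : Real.exp (t * (γ * l + 3 / 4 * l ^ 2))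
      = Real.exp (-(τ - γ) ^ 2 * t / 3) * Real.exp (l * (τ * t)) := by
    rw [← Real.exp_add]
    congr 1
    rw [hl]; ring
  rw [hexp, ← mul_assoc] at hup
  exact le_of_mul_le_mul_right (hlow.trans hup) (Real.exp_pos _)

/-- Markov's inequality for the number of events `W S` that occur, with no measurability
assumption on `W` or `A`. -/
lemma markov_card {ι Ω : Type*} [MeasurableSpace Ω] (μ : Measure Ω) [IsProbabilityMeasure μ]
    (B : Finset ι) (W : ι → Set Ω) (A : Set Ω) (c : ℝ)
    (h : ∀ ω ∈ A, c ≤ ((B.filter (fun S => ω ∈ W S)).card : ℝ)) :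
    c * (μ A).toReal ≤ ∑ S ∈ B, (μ (W S)).toReal := by
  rcases le_or_gt c 0 with hc | hc
  · exact (mul_nonpos_of_nonpos_of_nonneg hc ENNReal.toReal_nonneg).trans
      (Finset.sum_nonneg fun _ _ => ENNReal.toReal_nonneg)
  set f : Ω → ENNReal := fun ω => ∑ S ∈ B, (toMeasurable μ (W S)).indicator 1 ω with hf
  have hmeas : ∀ S ∈ B, Measurable ((toMeasurable μ (W S)).indicator (1 : Ω → ENNReal)) :=
    fun S _ => measurable_one.indicator (measurableSet_toMeasurable _ _)
  have hfm : Measurable f := Finset.measurable_fun_sum B hmeas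
  have hint : ∫⁻ ω, f ω ∂μ = ∑ S ∈ B, μ (W S) := by
    rw [hf, lintegral_finsetSum _ hmeas]
    refine Finset.sum_congr rfl fun S _ => ?_
    rw [lintegral_indicator_one (measurableSet_toMeasurable _ _), measure_toMeasurable]
  have hsub : A ⊆ {ω | ENNReal.ofReal c ≤ f ω} := by
    intro ω hω
    calc ENNReal.ofReal c
        ≤ ENNReal.ofReal ((B.filter (fun S => ω ∈ W S)).card : ℝ) :=
          ENNReal.ofReal_le_ofReal (h ω hω)
      _ = ∑ S ∈ B, (W S).indicator 1 ω := by
          rw [ENNReal.ofReal_natCast, Finset.card_filter]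
          push_cast
          refine Finset.sum_congr rfl fun S _ => ?_
          simp [Set.indicator_apply]
      _ ≤ f ω := Finset.sum_le_sum fun S _ =>
          Set.indicator_le_indicator_of_subset (subset_toMeasurable μ (W S)) (by simp) ω
  have key : ENNReal.ofReal c * μ A ≤ ∑ S ∈ B, μ (W S) := by
    rw [← hint]
    refine le_trans ?_ (mul_meas_ge_le_lintegral hfm (ENNReal.ofReal c))
    gcongr
  have := ENNReal.toReal_mono (by simp [ENNReal.sum_eq_top]) key
  rwa [ENNReal.toReal_mul, ENNReal.toReal_ofReal hc.le,
    ENNReal.toReal_sum (fun S _ => measure_ne_top μ _)] at this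

/-- The 'good sets' claim from the proof of Proposition 3.2.  `R` is a random subset of
`[n]` on an arbitrary probability space, with `κ = P(|R| ≥ (1-γ)n) > 0`.  A `t`-tuple
`S` of coordinates is 'bad' if `P(W_S^{≥1-τ}) < κ/2`.  If `exp(-(τ-γ)²t/3) ≤ 1/4`, then
a tuple drawn uniformly (each with probability `1/n^t`, independently of `R`) is bad
with probability at most `exp(-(τ-γ)²t/6)`. -/
theorem good_sets_claim (n t : ℕ) (hn : 1 ≤ n) (ht : 1 ≤ t)
    {Ω : Type*} [MeasurableSpace Ω] (μ : Measure Ω) [IsProbabilityMeasure μ]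
    (R : Ω → Finset (Fin n))
    (γ τ : ℝ) (hγ0 : 0 ≤ γ) (hγτ : γ < τ) (hτ1 : τ ≤ 1)
    (hκ : 0 < (μ {ω | (1 - γ) * (n : ℝ) ≤ ((R ω).card : ℝ)}).toReal)
    (hsmall : Real.exp (-(τ - γ) ^ 2 * t / 3) ≤ 1 / 4) :
    ((univ.filter (fun S : Fin t → Fin n =>
        (μ {ω | (1 - τ) * (t : ℝ) ≤ ((univ.filter (fun k => S k ∈ R ω)).card : ℝ)}).toReal
          < (μ {ω | (1 - γ) * (n : ℝ) ≤ ((R ω).card : ℝ)}).toReal / 2)).card : ℝ)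
      / (n : ℝ) ^ t
    ≤ Real.exp (-(τ - γ) ^ 2 * t / 6) := by
  have hn' : (0 : ℝ) < (n : ℝ) ^ t := by
    have : (0 : ℝ) < n := by exact_mod_cast hn
    positivity
  set A : Set Ω := {ω | (1 - γ) * (n : ℝ) ≤ ((R ω).card : ℝ)} with hA
  set W : (Fin t → Fin n) → Set Ω := fun S =>
    {ω | (1 - τ) * (t : ℝ) ≤ ((univ.filter (fun k => S k ∈ R ω)).card : ℝ)} with hW
  change ((univ.filter (fun S => (μ (W S)).toReal < (μ A).toReal / 2)).card : ℝ) / (n : ℝ) ^ t ≤ _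
  set B := univ.filter (fun S => (μ (W S)).toReal < (μ A).toReal / 2) with hB
  set ε := Real.exp (-(τ - γ) ^ 2 * t / 3) with hε
  have hM := markov_card μ B W A (B.card - (n : ℝ) ^ t * ε) (by
    intro ω hω
    have h1 := card_tuples_le n t hn γ τ hγ0 hγτ hτ1 (R ω) hω
    have h2 := Finset.card_filter_add_card_filter_not (s := B) (fun S => ω ∈ W S)
    have h3 : (B.filter (fun S => ¬ ω ∈ W S)).card ≤ (univ.filter (fun S => ¬ ω ∈ W S)).card :=
      Finset.card_le_card (Finset.filter_subset_filter _ (Finset.subset_univ _))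
    have h2' : ((B.filter (fun S => ω ∈ W S)).card : ℝ)
      + ((B.filter (fun S => ¬ ω ∈ W S)).card : ℝ) = B.card := by exact_mod_cast h2
    have h3' : ((B.filter (fun S => ¬ ω ∈ W S)).card : ℝ) ≤ (n : ℝ) ^ t * ε :=
      le_trans (by exact_mod_cast h3) h1
    linarith)
  have hS : ∑ S ∈ B, (μ (W S)).toReal ≤ B.card * ((μ A).toReal / 2) := by
    rw [← nsmul_eq_mul]
    exact Finset.sum_le_card_nsmul _ _ _ fun S hS => (Finset.mem_filter.1 hS).2.le
  have h4 : (B.card : ℝ) ≤ 2 * ((n : ℝ) ^ t * ε) := by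
    have h5 : ((B.card : ℝ) - (n : ℝ) ^ t * ε) * (μ A).toReal
        ≤ (B.card : ℝ) / 2 * (μ A).toReal := by linarith
    have := le_of_mul_le_mul_right h5 hκ
    linarith
  set q := Real.exp (-(τ - γ) ^ 2 * t / 6) with hq
  have hq0 : 0 < q := Real.exp_pos _
  have hεq : ε = q * q := by
    rw [hε, hq, ← Real.exp_add]; congr 1; ring
  have hq2 : q ≤ 1 / 2 := by
    rw [hεq] at hsmall
    nlinarith
  rw [div_le_iff₀ hn']
  calc (B.card : ℝ) ≤ 2 * ((n : ℝ) ^ t * ε) := h4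
    _ = (n : ℝ) ^ t * q * (2 * q) := by rw [hεq]; ring
    _ ≤ (n : ℝ) ^ t * q * 1 := by gcongr; linarith
    _ = q * (n : ℝ) ^ t := by ring
end
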